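/- For every integer n ≥ 6, no two-element subset of the vertex set of the convex polytope graph Δ_n is a resolving set of Δ_n; equivalently, for every pair of vertices a, b of Δ_n there exist two distinct vertices u, v with d(a,u) = d(a,v) and d(b,u) = d(b,v). -/

import Mathlib

/-- Vertices of the heptagonal circular ladder: four families indexed by `ZMod n`. -/
inductive HCLVertex (n : ℕ) : Type
  | p (t : ZMod n) : HCLVertex n
  | q (t : ZMod n) : HCLVertex n
  | r (t : ZMod n) : HCLVertex n
  | s (t : ZMod n) : HCLVertex n
deriving DecidableEq

/-- Base relation giving the edges of the heptagonal circular ladder `Γ_n`: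
`p_t p_{t+1}`, `p_t q_t`, `q_t r_t`, `r_t s_t`, `s_t r_{t+1}` (indices mod `n`). -/
def gammaRel (n : ℕ) : HCLVertex n → HCLVertex n → Prop
  | .p t, .p u => u = t + 1
  | .p t, .q u => u = t
  | .q t, .r u => u = t
  | .r t, .s u => u = t
  | .s t, .r u => u = t + 1
  | _, _ => False

/-- The heptagonal circular ladder `Γ_n`. -/
def Gamma (n : ℕ) : SimpleGraph (HCLVertex n) :=
  SimpleGraph.fromRel (gammaRel n)

/-- The extra edges `r_t q_{t+1}` added to `Γ_n` to obtain `Δ_n`. -/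
def deltaRel (n : ℕ) : HCLVertex n → HCLVertex n → Prop
  | .r t, .q u => u = t + 1
  | _, _ => False

/-- The convex polytope graph `Δ_n`, obtained from `Γ_n` by adding the edges `r_t q_{t+1}`. -/
def Delta (n : ℕ) : SimpleGraph (HCLVertex n) :=
  SimpleGraph.fromRel (fun v w => gammaRel n v w ∨ deltaRel n v w)

/-- `W` is a resolving set of `G`: every pair of distinct vertices is distinguished by
its distance to some vertex of `W`. -/
def IsResolving {V : Type*} (G : SimpleGraph V) (W : Set V) : Prop :=
  ∀ u v : V, u ≠ v → ∃ w ∈ W, G.dist w u ≠ G.dist w v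

/-- Distance from a vertex `x` to an edge `e = yz`: `min (d x y) (d x z)`. -/
noncomputable def edgeDist {V : Type*} (G : SimpleGraph V) (x : V) (e : Sym2 V) : ℕ :=
  Sym2.lift ⟨fun y z => min (G.dist x y) (G.dist x z), fun y z => min_comm _ _⟩ e

/-- `W` is an edge resolving set of `G`: every pair of distinct edges is distinguished by
its distance to some vertex of `W`. -/
def IsEdgeResolving {V : Type*} (G : SimpleGraph V) (W : Set V) : Prop :=
  ∀ e ∈ G.edgeSet, ∀ f ∈ G.edgeSet, e ≠ f → ∃ w ∈ W, edgeDist G w e ≠ edgeDist G w f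

/-!
A vertex `r_i` has degree four, while its neighbours take at most three values of the distance to
the other landmark, so two of them are not told apart. The remaining vertices lie in columns, and
the distance between two of them depends only on their rings and on the cyclic distance of their
columns. For landmarks in columns `i` and `j`, the reflection about column `i` swaps `r_i` and
`r_{i-1}`, so these are not told apart if it fixes column `j`. Otherwise moving from column `i` to
one side brings us closer to column `j`, moving to the other side does not, and two vertices in
columns within one step of `i` or `j` turn out to be at equal distances from both landmarks.
-/

/-- The distance between two columns `i`, `t` around the cycle `ZMod n`
(on the line `ℤ` if `n = 0`). -/
def cycDist {n : ℕ} (i t : ZMod n) : ℕ := (t - i).valMinAbs.natAbs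

/-- The three concentric rings `p`, `q`, `s` of `Δ_n`. The ring `r` is left out: its vertices lie
halfway between two columns and have degree four. -/
inductive Layer
  | outer
  | middle
  | inner

namespace Layer

/-- The vertex of a ring in column `t`. As `s_t` is adjacent to `r_t` and `r_{t+1}`, just like
`q_{t+1}`, it belongs to column `t + 1`. -/
def vertex {n : ℕ} (A : Layer) (t : ZMod n) : HCLVertex n :=
  match A with
  | outer => .p t
  | middle => .q t
  | inner => .s (t - 1)

/-- The distance in `Δ_n` between vertices of two rings whose columns are at distance `m`. -/
def dist : Layer → Layer → ℕ → ℕ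
  | outer, outer, m => m
  | outer, middle, m | middle, outer, m => m + 1
  | outer, inner, m | inner, outer, m => max 3 (m + 2)
  | middle, middle, m => min (2 * m) (m + 2)
  | middle, inner, m | inner, middle, m => max 2 (min (2 * m) (m + 3))
  | inner, inner, m => min (2 * m) (m + 4)

/-- The distance in `Δ_n` from a vertex of a ring to `r_t`, where `m` is the distance from the
column of that vertex to the nearer of the columns `t`, `t + 1`. -/
def distToR : Layer → ℕ → ℕ
  | outer, m => m + 2
  | middle, m => min (2 * m + 1) (m + 3)
  | inner, m => min (2 * m + 1) (m + 4)

/-- The distance in `Δ_n` from the vertex of a ring in column `i` to an arbitrary vertex. -/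
def distFrom {n : ℕ} (A : Layer) (i : ZMod n) : HCLVertex n → ℕ
  | .p t => A.dist outer (cycDist i t)
  | .q t => A.dist middle (cycDist i t)
  | .r t => A.distToR (min (cycDist i t) (cycDist i (t + 1)))
  | .s t => A.dist inner (cycDist i (t + 1))

end Layer

section Graph

variable {V : Type*} {G : SimpleGraph V}

theorem dist_eq_of_lipschitz_of_descent {a : V} (f : V → ℕ) (ha : f a = 0)
    (hlip : ∀ u v, G.Adj u v → f v ≤ f u + 1)
    (hdesc : ∀ v, v ≠ a → ∃ w, G.Adj w v ∧ f w < f v) (v : V) : G.dist a v = f v := by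
  have exists_walk : ∀ k v, f v = k → ∃ w : G.Walk a v, w.length ≤ k := by
    intro k
    induction k using Nat.strong_induction_on with
    | _ k ih =>
      rintro v rfl
      rcases eq_or_ne v a with rfl | hva
      · exact ⟨.nil, Nat.zero_le _⟩
      · obtain ⟨u, huv, hlt⟩ := hdesc v hva
        obtain ⟨w, hw⟩ := ih (f u) hlt u rfl
        exact ⟨w.concat huv, by simpa only [SimpleGraph.Walk.length_concat] using by lia⟩
  have le_length : ∀ {u v : V} (w : G.Walk u v), f v ≤ f u + w.length := by
    intro u v w
    induction w with
    | nil => exact le_rfl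
    | cons h w ih =>
      have := hlip _ _ h
      rw [SimpleGraph.Walk.length_cons]
      lia
  obtain ⟨w, hw⟩ := exists_walk (f v) v rfl
  refine le_antisymm ((SimpleGraph.dist_le w).trans hw) ?_
  obtain ⟨geodesic, hgeodesic⟩ := w.reachable.exists_walk_length_eq_dist
  simpa only [ha, zero_add, hgeodesic] using le_length geodesic

theorem not_isResolving_pair_of_dist_eq {a b u v : V} (huv : u ≠ v) (ha : G.dist a u = G.dist a v)
    (hb : G.dist b u = G.dist b v) : ¬ IsResolving G {a, b} := by
  intro hres
  obtain ⟨w, rfl | rfl, hw⟩ := hres u v huv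
  exacts [hw ha, hw hb]

-- The neighbours of `a` are all at distance one from `a`, and adjacency to `a` leaves only three
-- values for their distance to `b`.
theorem not_isResolving_pair_of_three_lt_card {a : V} {s : Finset V}
    (hs : ∀ v ∈ s, G.Adj a v) (hcard : 3 < s.card) (b : V) : ¬ IsResolving G {a, b} := by
  have maps_to : Set.MapsTo (G.dist b) s (Finset.Icc (G.dist b a - 1) (G.dist b a + 1)) := by
    intro v hv
    have := (hs v hv).diff_dist_adj (u := b)
    simp only [Finset.coe_Icc, Set.mem_Icc]
    lia
  have card_lt : (Finset.Icc (G.dist b a - 1) (G.dist b a + 1)).card < s.card := by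
    rw [Nat.card_Icc]
    lia
  obtain ⟨u, hu, v, hv, huv, hb⟩ :=
    Finset.exists_ne_map_eq_of_card_lt_of_maps_to card_lt maps_to
  have dist_eq_one : ∀ w ∈ s, G.dist a w = 1 := fun w hw =>
    SimpleGraph.dist_eq_one_iff_adj.mpr (hs w hw)
  exact not_isResolving_pair_of_dist_eq huv ((dist_eq_one u hu).trans (dist_eq_one v hv).symm) hb

end Graph

section CycDist

variable {n : ℕ}

theorem natAbs_valMinAbs_intCast_le (z : ℤ) : (z : ZMod n).valMinAbs.natAbs ≤ z.natAbs := by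
  rcases eq_zero_or_neZero n with rfl | hn
  · exact le_rfl
  · exact ZMod.natAbs_min_of_le_div_two n _ z (ZMod.coe_valMinAbs _) (ZMod.natAbs_valMinAbs_le _)

theorem cycDist_self (i : ZMod n) : cycDist i i = 0 := by simp [cycDist]

theorem cycDist_eq_zero {i t : ZMod n} : cycDist i t = 0 ↔ t = i := by
  simp [cycDist, sub_eq_zero]

theorem cycDist_comm (i t : ZMod n) : cycDist i t = cycDist t i := by
  rw [cycDist, cycDist, ← neg_sub, ZMod.natAbs_valMinAbs_neg]

theorem cycDist_triangle (i t u : ZMod n) : cycDist i u ≤ cycDist i t + cycDist t u := by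
  rw [add_comm, cycDist, ← sub_add_sub_cancel u t i]
  exact (ZMod.natAbs_valMinAbs_add_le _ _).trans (Int.natAbs_add_le _ _)

theorem cycDist_add_one_self [Nontrivial (ZMod n)] (t : ZMod n) : cycDist (t + 1) t = 1 := by
  have le_one : cycDist (t + 1) t ≤ 1 := by
    rw [cycDist_comm, cycDist, add_sub_cancel_left]
    simpa using natAbs_valMinAbs_intCast_le (n := n) 1
  have ne_zero : cycDist (t + 1) t ≠ 0 := by simp [cycDist_eq_zero]
  lia

theorem cycDist_self_add_one [Nontrivial (ZMod n)] (t : ZMod n) : cycDist t (t + 1) = 1 := by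
  rw [cycDist_comm, cycDist_add_one_self]

theorem cycDist_self_sub_one [Nontrivial (ZMod n)] (t : ZMod n) : cycDist t (t - 1) = 1 := by
  have := cycDist_add_one_self (t - 1)
  rwa [sub_add_cancel] at this

theorem cycDist_add_one_le [Nontrivial (ZMod n)] (i t : ZMod n) :
    cycDist i (t + 1) ≤ cycDist i t + 1 := by
  simpa only [cycDist_self_add_one] using cycDist_triangle i t (t + 1)

theorem cycDist_le_add_one [Nontrivial (ZMod n)] (i t : ZMod n) :
    cycDist i t ≤ cycDist i (t + 1) + 1 := by
  simpa only [cycDist_add_one_self] using cycDist_triangle i (t + 1) t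

theorem cycDist_add_one_lt_or_sub_one_lt {i t : ZMod n} (h : cycDist i t ≠ 0) :
    cycDist i (t + 1) < cycDist i t ∨ cycDist i (t - 1) < cycDist i t := by
  set z := (t - i).valMinAbs
  have cast_z : (z : ZMod n) = t - i := ZMod.coe_valMinAbs _
  have le_add_one : cycDist i (t + 1) ≤ (z + 1).natAbs := by
    simpa [cycDist, cast_z, sub_add_eq_add_sub] using natAbs_valMinAbs_intCast_le (n := n) (z + 1)
  have le_sub_one : cycDist i (t - 1) ≤ (z - 1).natAbs := by
    simpa [cycDist, cast_z, sub_right_comm] using natAbs_valMinAbs_intCast_le (n := n) (z - 1)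
  have : cycDist i t = z.natAbs := rfl
  lia

/-- `x` and `y` are columns next to column `i`, with `x` closer to column `j` than `i` is and
`y` no closer. The case `cycDist j y = cycDist j i` occurs when `i` and `j` are antipodal on an
odd cycle. -/
structure IsNearFarPair (i j x y : ZMod n) : Prop where
  near_dist : cycDist i x = 1
  far_dist : cycDist i y = 1
  dist_near : cycDist j x + 1 = cycDist j i
  dist_far : cycDist j y = cycDist j i ∨ cycDist j y = cycDist j i + 1

theorem exists_isNearFarPair [Nontrivial (ZMod n)] {i j : ZMod n}
    (h : cycDist j (i + 1) ≠ cycDist j (i - 1)) :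
    ∃ x y, IsNearFarPair i j x y := by
  have hij : i ≠ j := by
    rintro rfl
    exact h (by rw [cycDist_self_add_one, cycDist_self_sub_one])
  have closer := cycDist_add_one_lt_or_sub_one_lt (mt cycDist_eq_zero.mp hij)
  have succ_le := cycDist_add_one_le j i
  have le_succ := cycDist_le_add_one j i
  have pred_le : cycDist j (i - 1) ≤ cycDist j i + 1 := by
    simpa using cycDist_le_add_one j (i - 1)
  have le_pred : cycDist j i ≤ cycDist j (i - 1) + 1 := by
    simpa using cycDist_add_one_le j (i - 1)
  rcases closer with hlt | hlt
  · exact ⟨i + 1, i - 1, cycDist_self_add_one i, cycDist_self_sub_one i, by omega, by omega⟩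
  · exact ⟨i - 1, i + 1, cycDist_self_sub_one i, cycDist_self_add_one i, by omega, by omega⟩

end CycDist

section Adjacency

variable {n : ℕ} {t u : ZMod n}

theorem delta_adj_p_p [Nontrivial (ZMod n)] (h : t + 1 = u) : (Delta n).Adj (.p t) (.p u) := by
  simp [Delta, gammaRel, ← h]

theorem delta_adj_p_q (t : ZMod n) : (Delta n).Adj (.p t) (.q t) := by simp [Delta, gammaRel]

theorem delta_adj_q_r (t : ZMod n) : (Delta n).Adj (.q t) (.r t) := by simp [Delta, gammaRel]

theorem delta_adj_r_q (h : t + 1 = u) : (Delta n).Adj (.r t) (.q u) := by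
  simp [Delta, deltaRel, h]

theorem delta_adj_r_s (t : ZMod n) : (Delta n).Adj (.r t) (.s t) := by simp [Delta, gammaRel]

theorem delta_adj_s_r (h : t + 1 = u) : (Delta n).Adj (.s t) (.r u) := by
  simp [Delta, gammaRel, h]

end Adjacency

section Delta

variable {n : ℕ} {A B : Layer} {i j t x y : ZMod n}

theorem Layer.distFrom_vertex_self : A.distFrom i (A.vertex i) = 0 := by
  cases A <;> simp [vertex, distFrom, dist, cycDist_self]

theorem Layer.exists_adj_q_distFrom_lt (h : .q t ≠ A.vertex i) :
    ∃ w, (Delta n).Adj w (.q t) ∧ A.distFrom i w < A.distFrom i (.q t) := by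
  have closer := @cycDist_add_one_lt_or_sub_one_lt n i t
  have key : A.distFrom i (.p t) < A.distFrom i (.q t) ∨
      A.distFrom i (.r t) < A.distFrom i (.q t) ∨
      A.distFrom i (.r (t - 1)) < A.distFrom i (.q t) := by
    cases A <;> simp only [distFrom, dist, distToR, vertex, ne_eq, HCLVertex.q.injEq,
      ← cycDist_eq_zero (i := i), sub_add_cancel] at h ⊢ <;> omega
  rcases key with hlt | hlt | hlt
  exacts [⟨_, delta_adj_p_q t, hlt⟩, ⟨_, (delta_adj_q_r t).symm, hlt⟩,
    ⟨_, delta_adj_r_q (sub_add_cancel t 1), hlt⟩]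

theorem Layer.exists_adj_r_distFrom_lt (A : Layer) (i t : ZMod n) :
    ∃ w, (Delta n).Adj w (.r t) ∧ A.distFrom i w < A.distFrom i (.r t) := by
  have key : A.distFrom i (.q t) < A.distFrom i (.r t) ∨
      A.distFrom i (.q (t + 1)) < A.distFrom i (.r t) ∨
      A.distFrom i (.s t) < A.distFrom i (.r t) ∨
      A.distFrom i (.s (t - 1)) < A.distFrom i (.r t) := by
    cases A <;> simp only [distFrom, dist, distToR, sub_add_cancel] <;> omega
  rcases key with hlt | hlt | hlt | hlt
  exacts [⟨_, delta_adj_q_r t, hlt⟩, ⟨_, (delta_adj_r_q rfl).symm, hlt⟩,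
    ⟨_, (delta_adj_r_s t).symm, hlt⟩, ⟨_, delta_adj_s_r (sub_add_cancel t 1), hlt⟩]

theorem Layer.exists_adj_s_distFrom_lt (h : .s t ≠ A.vertex i) :
    ∃ w, (Delta n).Adj w (.s t) ∧ A.distFrom i w < A.distFrom i (.s t) := by
  have closer := @cycDist_add_one_lt_or_sub_one_lt n i (t + 1)
  have key : A.distFrom i (.r t) < A.distFrom i (.s t) ∨
      A.distFrom i (.r (t + 1)) < A.distFrom i (.s t) := by
    cases A <;> simp only [distFrom, dist, distToR, vertex, ne_eq, HCLVertex.s.injEq,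
      ← cycDist_eq_zero (i := i), eq_sub_iff_add_eq, add_sub_cancel_right] at closer h ⊢ <;> omega
  rcases key with hlt | hlt
  exacts [⟨_, delta_adj_r_s t, hlt⟩, ⟨_, (delta_adj_s_r rfl).symm, hlt⟩]

theorem HCLVertex.exists_eq_r_or_eq_vertex (v : HCLVertex n) :
    (∃ i, v = .r i) ∨ ∃ (A : Layer) (i : ZMod n), v = A.vertex i := by
  rcases v with t | t | t | t
  exacts [.inr ⟨.outer, t, rfl⟩, .inr ⟨.middle, t, rfl⟩, .inl ⟨t, rfl⟩,
    .inr ⟨.inner, t + 1, by rw [Layer.vertex, add_sub_cancel_right]⟩]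

variable [Nontrivial (ZMod n)]

theorem Layer.distFrom_le_of_adj {v w : HCLVertex n} (h : (Delta n).Adj v w) :
    A.distFrom i w ≤ A.distFrom i v + 1 := by
  have succ_le := cycDist_add_one_le i
  have le_succ := cycDist_le_add_one i
  have both : ∀ v w, gammaRel n v w ∨ deltaRel n v w →
      A.distFrom i w ≤ A.distFrom i v + 1 ∧ A.distFrom i v ≤ A.distFrom i w + 1 := by
    rintro (t | t | t | t) (u | u | u | u) hrel <;>
      simp only [gammaRel, deltaRel, or_false, false_or, or_self] at hrel <;> subst u <;>
      have := succ_le t <;> have := le_succ t <;>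
      have := succ_le (t + 1) <;> have := le_succ (t + 1) <;>
      cases A <;> simp only [distFrom, dist, distToR] <;> omega
  rcases ((SimpleGraph.fromRel_adj _ _ _).mp h).2 with hrel | hrel
  exacts [(both _ _ hrel).1, (both _ _ hrel).2]

theorem Layer.exists_adj_p_distFrom_lt (h : .p t ≠ A.vertex i) :
    ∃ w, (Delta n).Adj w (.p t) ∧ A.distFrom i w < A.distFrom i (.p t) := by
  have closer := @cycDist_add_one_lt_or_sub_one_lt n i t
  have key : A.distFrom i (.p (t + 1)) < A.distFrom i (.p t) ∨
      A.distFrom i (.p (t - 1)) < A.distFrom i (.p t) ∨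
      A.distFrom i (.q t) < A.distFrom i (.p t) := by
    cases A <;> simp only [distFrom, dist, vertex, ne_eq, HCLVertex.p.injEq,
      ← cycDist_eq_zero (i := i)] at h ⊢ <;> omega
  rcases key with hlt | hlt | hlt
  exacts [⟨_, (delta_adj_p_p rfl).symm, hlt⟩, ⟨_, delta_adj_p_p (sub_add_cancel t 1), hlt⟩,
    ⟨_, (delta_adj_p_q t).symm, hlt⟩]

theorem Layer.exists_adj_distFrom_lt {v : HCLVertex n} (h : v ≠ A.vertex i) :
    ∃ w, (Delta n).Adj w v ∧ A.distFrom i w < A.distFrom i v :=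
  match v with
  | .p _ => exists_adj_p_distFrom_lt h
  | .q _ => exists_adj_q_distFrom_lt h
  | .r t => exists_adj_r_distFrom_lt A i t
  | .s _ => exists_adj_s_distFrom_lt h

theorem delta_dist_eq_distFrom (A : Layer) (i : ZMod n) (v : HCLVertex n) :
    (Delta n).dist (A.vertex i) v = A.distFrom i v :=
  dist_eq_of_lipschitz_of_descent _ Layer.distFrom_vertex_self
    (fun _ _ => Layer.distFrom_le_of_adj) (fun _ => Layer.exists_adj_distFrom_lt) v

theorem delta_dist_vertex_vertex (A B : Layer) (i t : ZMod n) :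
    (Delta n).dist (A.vertex i) (B.vertex t) = A.dist B (cycDist i t) := by
  rw [delta_dist_eq_distFrom]
  cases B <;> simp only [Layer.vertex, Layer.distFrom, sub_add_cancel]

theorem not_isResolving_of_layerDist_eq (C : Layer) (t : ZMod n) (D : Layer) (u : ZMod n)
    (hne : C.vertex t ≠ D.vertex u)
    (ha : A.dist C (cycDist i t) = A.dist D (cycDist i u))
    (hb : B.dist C (cycDist j t) = B.dist D (cycDist j u)) :
    ¬ IsResolving (Delta n) {A.vertex i, B.vertex j} :=
  not_isResolving_pair_of_dist_eq hne (by simpa only [delta_dist_vertex_vertex] using ha)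
    (by simpa only [delta_dist_vertex_vertex] using hb)

theorem not_isResolving_r_pair (i : ZMod n) (b : HCLVertex n) :
    ¬ IsResolving (Delta n) {.r i, b} := by
  refine not_isResolving_pair_of_three_lt_card
    (s := {.q i, .q (i + 1), .s i, .s (i - 1)}) ?_ ?_ b
  · simpa using ⟨(delta_adj_q_r i).symm, delta_adj_r_q rfl, delta_adj_r_s i,
      (delta_adj_s_r (sub_add_cancel i 1)).symm⟩
  · simp [eq_sub_iff_add_eq]

-- The reflection about column `i` fixes column `j` and swaps `r_i` and `r_{i-1}`.
theorem not_isResolving_of_cycDist_eq (h : cycDist j (i + 1) = cycDist j (i - 1)) :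
    ¬ IsResolving (Delta n) {A.vertex i, B.vertex j} := by
  have r_ne : (.r i : HCLVertex n) ≠ .r (i - 1) := by simp [eq_sub_iff_add_eq]
  refine not_isResolving_pair_of_dist_eq r_ne ?_ ?_ <;>
    simp only [delta_dist_eq_distFrom, Layer.distFrom, sub_add_cancel]
  · rw [cycDist_self_add_one, cycDist_self_sub_one, cycDist_self]; rfl
  · rw [h, min_comm]

theorem not_isResolving_of_isNearFarPair
    (h : ∀ x y, IsNearFarPair i j x y → ¬ IsResolving (Delta n) {A.vertex i, B.vertex j}) :
    ¬ IsResolving (Delta n) {A.vertex i, B.vertex j} := by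
  by_cases heq : cycDist j (i + 1) = cycDist j (i - 1)
  · exact not_isResolving_of_cycDist_eq heq
  · obtain ⟨x, y, hxy⟩ := exists_isNearFarPair heq
    exact h x y hxy

theorem not_isResolving_of_antipodal (hA : A ≠ .inner) (hiy : cycDist i y = 1)
    (hjy : cycDist j y = cycDist j i) : ¬ IsResolving (Delta n) {A.vertex i, B.vertex j} := by
  have hne : Layer.inner.vertex i ≠ Layer.inner.vertex y := by
    suffices i ≠ y by simpa [Layer.vertex] using this
    rintro rfl
    simp [cycDist_self] at hiy
  refine not_isResolving_of_layerDist_eq .inner i .inner y hne ?_ (by rw [hjy])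
  rw [cycDist_self, hiy]
  cases A
  exacts [rfl, rfl, absurd rfl hA]

theorem not_isResolving_inner_of_layerDist_eq (hix : cycDist i x = 1)
    (hB : B.dist .middle (cycDist j i) = B.dist .inner (cycDist j x)) :
    ¬ IsResolving (Delta n) {Layer.inner.vertex i, B.vertex j} := by
  refine not_isResolving_of_layerDist_eq .middle i .inner x nofun ?_ hB
  rw [cycDist_self, hix]
  rfl

theorem not_isResolving_outer_outer (i j : ZMod n) :
    ¬ IsResolving (Delta n) {Layer.outer.vertex i, Layer.outer.vertex j} := by
  refine not_isResolving_of_isNearFarPair fun _ y ⟨_, hiy, _, hjy⟩ => ?_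
  rcases hjy with hjy | hjy
  · exact not_isResolving_of_antipodal nofun hiy hjy
  · refine not_isResolving_of_layerDist_eq .middle i .outer y nofun ?_ ?_ <;>
      simp only [cycDist_self, Layer.dist] <;> omega

theorem not_isResolving_middle_outer (i j : ZMod n) :
    ¬ IsResolving (Delta n) {Layer.middle.vertex i, Layer.outer.vertex j} := by
  refine not_isResolving_of_isNearFarPair fun x y ⟨_, hiy, hjx, hjy⟩ => ?_
  rcases hjy with hjy | hjy
  · exact not_isResolving_of_antipodal nofun hiy hjy
  · refine not_isResolving_of_layerDist_eq .middle y .inner i nofun ?_ ?_ <;>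
      simp only [cycDist_self, Layer.dist] <;> omega

theorem not_isResolving_inner_outer (i j : ZMod n) :
    ¬ IsResolving (Delta n) {Layer.inner.vertex i, Layer.outer.vertex j} := by
  refine not_isResolving_of_isNearFarPair fun x y ⟨hix, hiy, hjx, hjy⟩ => ?_
  have hij := cycDist_comm i j
  obtain hfar | hadj : 2 ≤ cycDist j i ∨ cycDist j i = 1 := by omega
  · refine not_isResolving_inner_of_layerDist_eq hix ?_
    simp only [Layer.dist]
    omega
  rcases hjy with hjy | hjy
  · rw [Set.pair_comm]
    exact not_isResolving_of_antipodal nofun (hjy.trans hadj) (by omega)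
  · refine not_isResolving_of_layerDist_eq .middle y .inner j nofun ?_ ?_ <;>
      simp only [cycDist_self, Layer.dist] <;> omega

theorem not_isResolving_middle_middle (i j : ZMod n) :
    ¬ IsResolving (Delta n) {Layer.middle.vertex i, Layer.middle.vertex j} := by
  refine not_isResolving_of_isNearFarPair fun x y ⟨hix, hiy, hjx, hjy⟩ => ?_
  obtain hfar | htwo | hone : 3 ≤ cycDist j i ∨ cycDist j i = 2 ∨ cycDist j i = 1 := by omega
  · rcases hjy with hjy | hjy
    · exact not_isResolving_of_antipodal nofun hiy hjy
    · refine not_isResolving_of_layerDist_eq .middle y .inner i nofun ?_ ?_ <;>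
        simp only [cycDist_self, Layer.dist] <;> omega
  · refine not_isResolving_of_layerDist_eq .middle x .inner x nofun ?_ ?_ <;>
      simp only [Layer.dist] <;> omega
  · refine not_isResolving_of_layerDist_eq .middle y .inner y nofun ?_ ?_ <;>
      simp only [Layer.dist] <;> omega

theorem not_isResolving_inner_middle (i j : ZMod n) :
    ¬ IsResolving (Delta n) {Layer.inner.vertex i, Layer.middle.vertex j} := by
  refine not_isResolving_of_isNearFarPair fun x _ ⟨hix, _, hjx, _⟩ => ?_
  obtain hfar | hnear : (cycDist j i = 1 ∨ 4 ≤ cycDist j i) ∨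
      cycDist j i = 2 ∨ cycDist j i = 3 := by omega
  · refine not_isResolving_inner_of_layerDist_eq hix ?_
    simp only [Layer.dist]
    omega
  · refine not_isResolving_of_layerDist_eq .middle x .inner x nofun ?_ ?_ <;>
      simp only [Layer.dist] <;> omega

theorem not_isResolving_inner_inner (i j : ZMod n) :
    ¬ IsResolving (Delta n) {Layer.inner.vertex i, Layer.inner.vertex j} := by
  refine not_isResolving_of_isNearFarPair fun x y ⟨hix, hiy, hjx, hjy⟩ => ?_
  obtain hfar | hnear | hone : 5 ≤ cycDist j i ∨
      (2 ≤ cycDist j i ∧ cycDist j i ≤ 4) ∨ cycDist j i = 1 := by omega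
  · refine not_isResolving_inner_of_layerDist_eq hix ?_
    simp only [Layer.dist]
    omega
  · refine not_isResolving_of_layerDist_eq .middle x .inner x nofun ?_ ?_ <;>
      simp only [Layer.dist] <;> omega
  · refine not_isResolving_of_layerDist_eq .middle y .inner y nofun ?_ ?_ <;>
      simp only [Layer.dist] <;> omega

theorem not_isResolving_vertex_vertex (A B : Layer) (i j : ZMod n) :
    ¬ IsResolving (Delta n) {A.vertex i, B.vertex j} := by
  cases A <;> cases B
  case outer.outer => exact not_isResolving_outer_outer i j
  case middle.outer => exact not_isResolving_middle_outer i j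
  case inner.outer => exact not_isResolving_inner_outer i j
  case middle.middle => exact not_isResolving_middle_middle i j
  case inner.middle => exact not_isResolving_inner_middle i j
  case inner.inner => exact not_isResolving_inner_inner i j
  case outer.middle => exact Set.pair_comm _ _ ▸ not_isResolving_middle_outer j i
  case outer.inner => exact Set.pair_comm _ _ ▸ not_isResolving_inner_outer j i
  case middle.inner => exact Set.pair_comm _ _ ▸ not_isResolving_inner_middle j i

end Delta

theorem delta_no_two_element_resolving_general (n : ℕ) (hn : n ≠ 1) (a b : HCLVertex n) :
    ¬ IsResolving (Delta n) {a, b} := by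
  have : Nontrivial (ZMod n) := ZMod.nontrivial_iff.mpr hn
  obtain ⟨i, rfl⟩ | ⟨A, i, rfl⟩ := a.exists_eq_r_or_eq_vertex
  · exact not_isResolving_r_pair i b
  obtain ⟨j, rfl⟩ | ⟨B, j, rfl⟩ := b.exists_eq_r_or_eq_vertex
  · rw [Set.pair_comm]
    exact not_isResolving_r_pair j _
  · exact not_isResolving_vertex_vertex A B i j

theorem delta_no_two_element_resolving (n : ℕ) (hn : 6 ≤ n) :
    ∀ W : Finset (HCLVertex n), W.card = 2 → ¬ IsResolving (Delta n) ↑W := by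
  intro W hW
  obtain ⟨a, b, -, rfl⟩ := Finset.card_eq_two.mp hW
  simpa only [Finset.coe_pair] using delta_no_two_element_resolving_general n (by omega) a b
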